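/- Assume Q_k = k + O(1) and fix 0 < ε < α_θ + 1. Let X, X', Y, Y' be sequences of positive reals with ln X_k = α_θ·ln k + o(1), ln X'_k = ln X_k + O(k^{−ε}), φ_j(X,Y) = Q_j and φ_j(X',Y') = Q_j for all j. Then ln Y'_j = ln Y_j + O(j^{−ε}) as j → ∞. -/

import Mathlib

open Filter Asymptotics MeasureTheory
open scoped ENNReal Topology

/-- `Theta θ E' E` is the argument of the complex number `E' + E·e^{iθ}`;
for `0 < θ < π` and `E', E > 0` it lies in `(0, θ)` and equals
`arctan (sin θ / (E'/E + cos θ))` with the branch taken in `(0, θ)`. -/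
noncomputable def Theta (θ E' E : ℝ) : ℝ :=
  Complex.arg ((E' : ℂ) + (E : ℂ) * Complex.exp (θ * Complex.I))

/-- `phi θ X Y j = (1/π) · ∑_{k ≥ 1} Θ(X_k, Y_j) ∈ (0, ∞]`, where sequences are
indexed by `ℕ` and only the values at indices `k ≥ 1` are used. -/
noncomputable def phi (θ : ℝ) (X Y : ℕ → ℝ) (j : ℕ) : ℝ≥0∞ :=
  ENNReal.ofReal (1 / Real.pi) * ∑' k : ℕ, ENNReal.ofReal (Theta θ (X (k + 1)) (Y j))

/-- `Pker θ E E' = E·E' / (E² + 2·cos θ·E·E' + E'²)`. -/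
noncomputable def Pker (θ E E' : ℝ) : ℝ :=
  E * E' / (E ^ 2 + 2 * Real.cos θ * E * E' + E' ^ 2)

/-- The drift `D_α = (1/π) ∫_0^∞ Θ(s^α, 1) ds`. -/
noncomputable def Drift (θ α : ℝ) : ℝ :=
  (1 / Real.pi) * ∫ s in Set.Ioi (0 : ℝ), Theta θ (s ^ α) 1

/-- `S_ε = ∫_0^∞ s^{-ε} / (s^{α_θ} + 2 cos θ + s^{-α_θ}) ds` with `α_θ = 1 + θ/π`. -/
noncomputable def Sfun (θ ε : ℝ) : ℝ :=
  ∫ s in Set.Ioi (0 : ℝ), s ^ (-ε) /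
    (s ^ (1 + θ / Real.pi) + 2 * Real.cos θ + s ^ (-(1 + θ / Real.pi)))


noncomputable def Gf (θ t : ℝ) : ℝ :=
  Real.pi / 2 - Real.arctan ((Real.exp (-t) + Real.cos θ) / Real.sin θ)

noncomputable def Gd (θ t : ℝ) : ℝ :=
  Real.sin θ / (Real.exp t + Real.exp (-t) + 2 * Real.cos θ)

lemma arg_of_im_pos' (u v : ℝ) (hv : 0 < v) :
    Complex.arg ((u : ℂ) + (v : ℂ) * Complex.I) = Real.pi / 2 - Real.arctan (u / v) := by
  have hs : 0 < Real.sqrt (1 + (u / v) ^ 2) := Real.sqrt_pos.mpr (by positivity)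
  have h1 := Real.arctan_lt_pi_div_two (u / v)
  have h2 := Real.neg_pi_div_two_lt_arctan (u / v)
  have key := Complex.arg_mul_cos_add_sin_mul_I (r := v * Real.sqrt (1 + (u / v) ^ 2))
    (by positivity) (θ := Real.pi / 2 - Real.arctan (u / v)) ⟨by linarith, by linarith⟩
  rw [← key]
  congr 1
  rw [← Complex.ofReal_cos, ← Complex.ofReal_sin, Real.cos_pi_div_two_sub,
    Real.sin_pi_div_two_sub, Real.sin_arctan, Real.cos_arctan]
  have e1 : u = v * Real.sqrt (1 + (u / v) ^ 2) * (u / v / Real.sqrt (1 + (u / v) ^ 2)) := by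
    field_simp
  have e2 : v = v * Real.sqrt (1 + (u / v) ^ 2) * (1 / Real.sqrt (1 + (u / v) ^ 2)) := by
    field_simp
  rw [mul_add, ← mul_assoc]
  rw [← Complex.ofReal_mul, ← Complex.ofReal_mul, ← e1, ← e2]

lemma Theta_eq (θ : ℝ) (hθ : 0 < θ) (hθπ : θ < Real.pi) (x y : ℝ) (hx : 0 < x) (hy : 0 < y) :
    Theta θ x y = Gf θ (Real.log y - Real.log x) := by
  have hs := Real.sin_pos_of_pos_of_lt_pi hθ hθπ
  have : (x : ℂ) + (y : ℂ) * Complex.exp (θ * Complex.I)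
      = ((x + y * Real.cos θ : ℝ) : ℂ) + ((y * Real.sin θ : ℝ) : ℂ) * Complex.I := by
    rw [Complex.exp_mul_I]; push_cast; ring
  rw [Theta, this, arg_of_im_pos' _ _ (by positivity), Gf]
  congr 2
  rw [neg_sub, Real.exp_sub, Real.exp_log hx, Real.exp_log hy]
  field_simp

lemma den_lower (θ : ℝ) (t : ℝ) :
    (1 + Real.cos θ) / 2 * (Real.exp t + Real.exp (-t))
      ≤ Real.exp t + Real.exp (-t) + 2 * Real.cos θ := by
  have h1 := Real.cos_le_one θ
  have h2 := Real.neg_one_le_cos θ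
  have h3 := Real.one_le_cosh t
  rw [Real.cosh_eq] at h3
  nlinarith

lemma one_add_cos_pos (θ : ℝ) (hθ : 0 < θ) (hθπ : θ < Real.pi) : 0 < 1 + Real.cos θ := by
  have := Real.cos_lt_cos_of_nonneg_of_le_pi hθ.le le_rfl hθπ
  rw [Real.cos_pi] at this; linarith

lemma den_pos (θ : ℝ) (hθ : 0 < θ) (hθπ : θ < Real.pi) (t : ℝ) :
    0 < Real.exp t + Real.exp (-t) + 2 * Real.cos θ := by
  have := one_add_cos_pos θ hθ hθπ
  exact lt_of_lt_of_le (by positivity) (den_lower θ t)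

lemma Gd_pos (θ : ℝ) (hθ : 0 < θ) (hθπ : θ < Real.pi) (t : ℝ) : 0 < Gd θ t :=
  div_pos (Real.sin_pos_of_pos_of_lt_pi hθ hθπ) (den_pos θ hθ hθπ t)

lemma Gd_le (θ : ℝ) (hθ : 0 < θ) (hθπ : θ < Real.pi) :
    ∃ C > 0, ∀ t, Gd θ t ≤ C * Real.exp (-|t|) := by
  have hs := Real.sin_pos_of_pos_of_lt_pi hθ hθπ
  have hc := one_add_cos_pos θ hθ hθπ
  refine ⟨2 * Real.sin θ / (1 + Real.cos θ), by positivity, fun t => ?_⟩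
  have h1 : Real.exp |t| ≤ Real.exp t + Real.exp (-t) := by
    rcases abs_cases t with h | h <;> rw [h.1] <;> linarith [Real.exp_pos t, Real.exp_pos (-t)]
  calc Gd θ t ≤ Real.sin θ / ((1 + Real.cos θ) / 2 * Real.exp |t|) := by
        unfold Gd
        gcongr
        exact le_trans (by gcongr) (den_lower θ t)
    _ = _ := by rw [Real.exp_neg]; field_simp

lemma Gd_ge (θ : ℝ) (hθ : 0 < θ) (hθπ : θ < Real.pi) (T : ℝ) :
    ∃ c > 0, ∀ t, |t| ≤ T → c ≤ Gd θ t := by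
  have hs := Real.sin_pos_of_pos_of_lt_pi hθ hθπ
  refine ⟨Real.sin θ / (Real.exp T + Real.exp T + 2), by positivity, fun t ht => ?_⟩
  have := abs_le.mp ht
  unfold Gd
  have := Real.cos_le_one θ
  gcongr
  · exact den_pos θ hθ hθπ t
  · linarith
  · linarith
  · linarith

lemma Gf_deriv (θ : ℝ) (hθ : 0 < θ) (hθπ : θ < Real.pi) (t : ℝ) :
    HasDerivAt (Gf θ) (Gd θ t) t := by
  have hs := Real.sin_pos_of_pos_of_lt_pi hθ hθπ
  have h0 : HasDerivAt (fun t : ℝ => (Real.exp (-t) + Real.cos θ) / Real.sin θ)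
      ((Real.exp (-t) * (-1)) / Real.sin θ) t :=
    (((hasDerivAt_neg t).exp).add_const _).div_const _
  have h1 := (h0.arctan).const_sub (Real.pi / 2)
  have h2 := den_pos θ hθ hθπ t
  have he : Real.exp t * Real.exp (-t) = 1 := by rw [← Real.exp_add]; simp
  have hsc := Real.sin_sq_add_cos_sq θ
  refine h1.congr_deriv ?_
  unfold Gd
  have : (1 + ((Real.exp (-t) + Real.cos θ) / Real.sin θ) ^ 2)
     = Real.exp (-t) * (Real.exp t + Real.exp (-t) + 2 * Real.cos θ) / Real.sin θ ^ 2 := by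
    field_simp
    linear_combination hsc - he
  rw [this]
  have := Real.exp_pos (-t)
  field_simp

lemma Gf_mvt (θ : ℝ) (hθ : 0 < θ) (hθπ : θ < Real.pi) (a b : ℝ) :
    ∃ ξ ∈ Set.uIcc a b, Gf θ b - Gf θ a = Gd θ ξ * (b - a) := by
  have main : ∀ a b : ℝ, a < b → ∃ ξ ∈ Set.uIcc a b, Gf θ b - Gf θ a = Gd θ ξ * (b - a) := by
    intro a b hab
    obtain ⟨ξ, h1, h2⟩ := exists_hasDerivAt_eq_slope (Gf θ) (Gd θ) hab
      (fun x _ => (Gf_deriv θ hθ hθπ x).continuousAt.continuousWithinAt)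
      (fun x _ => Gf_deriv θ hθ hθπ x)
    refine ⟨ξ, ?_, ?_⟩
    · rw [Set.uIcc_of_le hab.le]; exact Set.Ioo_subset_Icc_self h1
    · rw [h2]; have : b - a ≠ 0 := by linarith
      field_simp
  rcases lt_trichotomy a b with h | h | h
  · exact main a b h
  · subst h; exact ⟨a, by simp, by simp⟩
  · obtain ⟨ξ, h1, h2⟩ := main b a h
    exact ⟨ξ, by rwa [Set.uIcc_comm], by linear_combination -h2⟩

lemma Gf_mono (θ : ℝ) (hθ : 0 < θ) (hθπ : θ < Real.pi) : Monotone (Gf θ) := by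
  intro a b hab
  obtain ⟨ξ, _, h⟩ := Gf_mvt θ hθ hθπ a b
  nlinarith [Gd_pos θ hθ hθπ ξ]

lemma Gf_pos (θ t : ℝ) : 0 < Gf θ t := by
  unfold Gf; linarith [Real.arctan_lt_pi_div_two ((Real.exp (-t) + Real.cos θ) / Real.sin θ)]

lemma Gf_tendsto (θ : ℝ) (hθ : 0 < θ) (hθπ : θ < Real.pi) :
    Tendsto (Gf θ) atBot (𝓝 0) := by
  have hs := Real.sin_pos_of_pos_of_lt_pi hθ hθπ
  have h1 : Tendsto (fun t : ℝ => (Real.exp (-t) + Real.cos θ) / Real.sin θ) atBot atTop :=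
    (tendsto_atTop_add_const_right _ _
      (Real.tendsto_exp_atTop.comp tendsto_neg_atBot_atTop)).atTop_div_const hs
  have h2 := (Real.tendsto_arctan_atTop.mono_right nhdsWithin_le_nhds).comp h1
  have h3 := h2.const_sub (Real.pi / 2)
  rw [sub_self] at h3
  exact h3

/-- upper bound on `Gf`. -/
lemma Gf_le (θ : ℝ) (hθ : 0 < θ) (hθπ : θ < Real.pi) :
    ∃ C > 0, ∀ t, Gf θ t ≤ C * min 1 (Real.exp t) := by
  obtain ⟨C, hC, h⟩ := Gd_le θ hθ hθπ
  have hexp : ∀ t, Gf θ t ≤ C * Real.exp t := by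
    have hd : ∀ t, HasDerivAt (fun t => C * Real.exp t - Gf θ t) (C * Real.exp t - Gd θ t) t :=
      fun t => ((Real.hasDerivAt_exp t).const_mul C).sub (Gf_deriv θ hθ hθπ t)
    have hm : Monotone (fun t => C * Real.exp t - Gf θ t) := by
      refine monotone_of_deriv_nonneg (fun t => (hd t).differentiableAt) fun t => ?_
      rw [(hd t).deriv]
      have : Real.exp (-|t|) ≤ Real.exp t := Real.exp_le_exp.mpr (neg_abs_le t)
      nlinarith [h t]
    have ht : Tendsto (fun t => C * Real.exp t - Gf θ t) atBot (𝓝 0) := by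
      simpa using (Real.tendsto_exp_atBot.const_mul C).sub (Gf_tendsto θ hθ hθπ)
    intro t
    have := hm.le_of_tendsto ht t
    simpa using this
  have hpi : ∀ t, Gf θ t ≤ Real.pi := fun t => by
    unfold Gf
    linarith [Real.neg_pi_div_two_lt_arctan ((Real.exp (-t) + Real.cos θ) / Real.sin θ)]
  refine ⟨max C Real.pi, by positivity, fun t => ?_⟩
  rw [mul_min_of_nonneg _ _ (by positivity), le_min_iff]
  exact ⟨by rw [mul_one]; exact (hpi t).trans (le_max_right _ _),
    (hexp t).trans (by gcongr; exact le_max_left _ _)⟩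

lemma Gf_lip (θ : ℝ) (hθ : 0 < θ) (hθπ : θ < Real.pi) (M : ℝ) :
    ∃ C > 0, ∀ a b, |a - b| ≤ M → |Gf θ a - Gf θ b| ≤ C * |a - b| * Real.exp (-|b|) := by
  obtain ⟨C, hC, h⟩ := Gd_le θ hθ hθπ
  refine ⟨C * Real.exp M, by positivity, fun a b hab => ?_⟩
  obtain ⟨ξ, hξ, e⟩ := Gf_mvt θ hθ hθπ b a
  rw [e, abs_mul, abs_of_pos (Gd_pos θ hθ hθπ ξ)]
  have h1 : |ξ - b| ≤ |a - b| := Set.abs_sub_left_of_mem_uIcc hξ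
  have h2 : -|ξ| ≤ M + -|b| := by
    have := abs_sub_abs_le_abs_sub b ξ
    rw [abs_sub_comm] at this
    linarith
  calc Gd θ ξ * |a - b| ≤ (C * Real.exp (M + -|b|)) * |a - b| := by
        gcongr
        exact (h ξ).trans (by gcongr)
    _ = _ := by rw [Real.exp_add]; ring

lemma Gf_lower (θ : ℝ) (hθ : 0 < θ) (hθπ : θ < Real.pi) (T : ℝ) :
    ∃ c > 0, ∀ a b, |a| ≤ T → c * min |b - a| 1 ≤ |Gf θ b - Gf θ a| := by
  obtain ⟨c, hc, h⟩ := Gd_ge θ hθ hθπ (T + 1)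
  refine ⟨c, hc, fun a b ha => ?_⟩
  have hm := Gf_mono θ hθ hθπ
  have ha' := abs_le.mp ha
  have base : ∀ b, |b - a| ≤ 1 → c * |b - a| ≤ |Gf θ b - Gf θ a| := by
    intro b hb
    obtain ⟨ξ, hξ, e⟩ := Gf_mvt θ hθ hθπ a b
    rw [e, abs_mul, abs_of_pos (Gd_pos θ hθ hθπ ξ)]
    have h1 : |ξ - a| ≤ |b - a| := Set.abs_sub_left_of_mem_uIcc hξ
    gcongr
    apply h
    have := abs_le.mp (h1.trans hb)
    rw [abs_le]; constructor <;> linarith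
  by_cases hb : |b - a| ≤ 1
  · rw [min_eq_left hb]; exact base b hb
  · push Not at hb
    rw [min_eq_right hb.le]
    rcases le_total a b with hab | hab
    · have h2 := base (a + 1) (by simp)
      have h3 : a + 1 ≤ b := by rw [abs_of_nonneg (by linarith)] at hb; linarith
      rw [abs_of_nonneg (sub_nonneg.mpr (hm hab))]
      rw [abs_of_nonneg (sub_nonneg.mpr (hm (by linarith)))] at h2
      simp at h2
      linarith [hm h3]
    · have h2 := base (a - 1) (by simp)
      have h3 : b ≤ a - 1 := by rw [abs_of_nonpos (by linarith)] at hb; linarith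
      rw [abs_of_nonpos (sub_nonpos.mpr (hm hab))]
      rw [abs_of_nonpos (sub_nonpos.mpr (hm (by linarith)))] at h2
      simp at h2
      linarith [hm h3]


noncomputable def hR (p q R k : ℝ) : ℝ :=
  if k ≤ R then (k / R) ^ (p - 1) else (k / R) ^ (-q - 1)

lemma tele_low (p : ℝ) (hp : 0 < p) (hp1 : p ≤ 1) (k : ℝ) (hk : 0 ≤ k) :
    (k + 1) ^ (p - 1) ≤ ((k + 1) ^ p - k ^ p) / p := by
  have hk1 : 0 < k + 1 := by linarith
  rw [le_div_iff₀ hp]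
  have hb := rpow_one_add_le_one_add_mul_self (s := -1 / (k + 1)) (p := p)
    (by rw [le_div_iff₀ hk1]; linarith) hp.le hp1
  have e : 1 + -1 / (k + 1) = k / (k + 1) := by field_simp; ring
  rw [e, Real.div_rpow hk hk1.le, div_le_iff₀ (by positivity)] at hb
  have e2 : (k + 1) ^ (p - 1) = (k + 1) ^ p / (k + 1) := by
    rw [Real.rpow_sub hk1, Real.rpow_one]
  rw [e2]
  have : (1 + p * (-1 / (k + 1))) * (k + 1) ^ p = (k + 1) ^ p - (k + 1) ^ p / (k + 1) * p := by
    ring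
  linarith

lemma tele_high (q : ℝ) (hq : 0 < q) (k : ℝ) (hk : 0 < k) :
    (k + 1) ^ (-q - 1) ≤ (k ^ (-q) - (k + 1) ^ (-q)) / q := by
  have hk1 : 0 < k + 1 := by linarith
  rw [le_div_iff₀ hq]
  have hb : 1 + q / (k + 1) ≤ (k / (k + 1)) ^ (-q) := by
    rw [Real.rpow_def_of_pos (by positivity)]
    have h1 := Real.log_le_sub_one_of_pos (x := k / (k + 1)) (by positivity)
    have h2 := Real.add_one_le_exp (Real.log (k / (k + 1)) * -q)
    have e : k / (k + 1) - 1 = - (1 / (k + 1)) := by field_simp; ring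
    rw [e] at h1
    have : q * Real.log (k / (k + 1)) ≤ q * -(1 / (k + 1)) := by gcongr
    have e3 : q * -(1 / (k + 1)) = - (q / (k + 1)) := by ring
    linarith
  rw [Real.div_rpow hk.le hk1.le, le_div_iff₀ (by positivity)] at hb
  have e2 : (k + 1) ^ (-q - 1) = (k + 1) ^ (-q) / (k + 1) := by
    rw [Real.rpow_sub hk1, Real.rpow_one]
  rw [e2]
  have : (1 + q / (k + 1)) * (k + 1) ^ (-q) = (k + 1) ^ (-q) + (k + 1) ^ (-q) / (k + 1) * q := by
    ring
  linarith

lemma hR_sum (p q : ℝ) (hp : 0 < p) (hp1 : p ≤ 1) (hq : 0 < q) (R : ℝ) (hR1 : 1 ≤ R) (M : ℕ) :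
    ∑ k ∈ Finset.range M, hR p q R ((k : ℝ) + 1) ≤ (1 / p + 2 ^ q / q) * R := by
  have hR0 : 0 < R := by linarith
  let F : ℕ → ℝ := fun k => R ^ (1 - p) / p * (min (k : ℝ) R) ^ p
    - R ^ (q + 1) / q * (max (k : ℝ) (R / 2)) ^ (-q)
  have step : ∀ k : ℕ, hR p q R ((k : ℝ) + 1) ≤ F (k + 1) - F k := by
    intro k
    have hk : (0 : ℝ) ≤ k := Nat.cast_nonneg k
    have hmin : (min (k : ℝ) R) ^ p ≤ (min ((k : ℝ) + 1) R) ^ p := by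
      apply Real.rpow_le_rpow (by positivity) _ hp.le
      exact min_le_min_right _ (by linarith)
    have hmax : (max ((k : ℝ) + 1) (R / 2)) ^ (-q) ≤ (max (k : ℝ) (R / 2)) ^ (-q) := by
      apply Real.rpow_le_rpow_of_nonpos (by positivity) _ (by linarith)
      exact max_le_max_right _ (by linarith)
    have c1 : 0 ≤ R ^ (1 - p) / p := by positivity
    have c2 : 0 ≤ R ^ (q + 1) / q := by positivity
    have m1 := mul_le_mul_of_nonneg_left hmin c1
    have m2 := mul_le_mul_of_nonneg_left hmax c2
    simp only [F, Nat.cast_add, Nat.cast_one]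
    unfold hR
    split_ifs with h
    · have t := tele_low p hp hp1 k hk
      rw [min_eq_left h, min_eq_left (by linarith : (k : ℝ) ≤ R)]
      have : ((k + 1 : ℝ) / R) ^ (p - 1) = R ^ (1 - p) * (k + 1 : ℝ) ^ (p - 1) := by
        rw [Real.div_rpow (by positivity) hR0.le, div_eq_mul_inv, ← Real.rpow_neg hR0.le, mul_comm]
        congr 2; ring
      rw [this]
      have t2 := mul_le_mul_of_nonneg_left t (by positivity : 0 ≤ R ^ (1 - p))
      have e : R ^ (1 - p) * (((k : ℝ) + 1) ^ p - (k : ℝ) ^ p) / p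
        = R ^ (1 - p) / p * ((k : ℝ) + 1) ^ p - R ^ (1 - p) / p * (k : ℝ) ^ p := by ring
      rw [← mul_div_assoc, e] at t2
      linarith
    · push Not at h
      have hk1 : 1 ≤ (k : ℝ) := by
        have : (0 : ℝ) < k := by linarith
        exact_mod_cast this
      have t := tele_high q hq k (by linarith)
      rw [max_eq_left (by linarith : R / 2 ≤ (k : ℝ) + 1),
        max_eq_left (by linarith : R / 2 ≤ (k : ℝ))]
      have : ((k + 1 : ℝ) / R) ^ (-q - 1) = R ^ (q + 1) * (k + 1 : ℝ) ^ (-q - 1) := by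
        rw [Real.div_rpow (by positivity) hR0.le, div_eq_mul_inv, ← Real.rpow_neg hR0.le, mul_comm]
        congr 2; ring
      rw [this]
      have t2 := mul_le_mul_of_nonneg_left t (by positivity : 0 ≤ R ^ (q + 1))
      have e : R ^ (q + 1) * ((k : ℝ) ^ (-q) - ((k : ℝ) + 1) ^ (-q)) / q
        = R ^ (q + 1) / q * (k : ℝ) ^ (-q) - R ^ (q + 1) / q * ((k : ℝ) + 1) ^ (-q) := by ring
      rw [← mul_div_assoc, e] at t2
      linarith
  refine (Finset.sum_le_sum fun k _ => step k).trans ?_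
  rw [Finset.sum_range_sub F]
  have u1 : F M ≤ R ^ (1 - p) / p * R ^ p := by
    have : (min (M : ℝ) R) ^ p ≤ R ^ p :=
      Real.rpow_le_rpow (by positivity) (min_le_right _ _) hp.le
    have c1 : 0 ≤ R ^ (1 - p) / p := by positivity
    have m1 := mul_le_mul_of_nonneg_left this c1
    have : 0 ≤ R ^ (q + 1) / q * (max (M : ℝ) (R / 2)) ^ (-q) := by positivity
    simp only [F]; linarith
  have u2 : F 0 = - (R ^ (q + 1) / q * (R / 2) ^ (-q)) := by
    simp only [F, Nat.cast_zero]
    rw [min_eq_left hR0.le, max_eq_right (by linarith), Real.zero_rpow hp.ne']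
    ring
  have e1 : R ^ (1 - p) / p * R ^ p = 1 / p * R := by
    have : R ^ (1 - p) * R ^ p = R := by rw [← Real.rpow_add hR0]; simp
    rw [div_mul_eq_mul_div, this]; ring
  have e2 : R ^ (q + 1) / q * (R / 2) ^ (-q) = 2 ^ q / q * R := by
    have : R ^ (q + 1) * R ^ (-q) = R := by rw [← Real.rpow_add hR0]; simp
    rw [Real.div_rpow hR0.le (by norm_num), Real.rpow_neg (by norm_num : (0:ℝ) ≤ 2)]
    have h2 : (0 : ℝ) < 2 ^ q := by positivity
    field_simp
    linear_combination this
  rw [u2]; rw [e1] at u1; rw [e2]; linarith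

/-- comparison 1 -/
lemma min_le_hR (p q : ℝ) (hp1 : p ≤ 1) (R k : ℝ) (hR0 : 0 < R) (hk : 0 < k) :
    min 1 (Real.exp ((q + 1) * (Real.log R - Real.log k))) ≤ hR p q R k := by
  unfold hR
  have hkR : 0 < k / R := by positivity
  rw [Real.rpow_def_of_pos hkR, Real.rpow_def_of_pos hkR, Real.log_div hk.ne' hR0.ne']
  split_ifs with h
  · refine (min_le_left _ _).trans ?_
    rw [Real.one_le_exp_iff]
    have := Real.log_le_log hk h
    nlinarith
  · refine (min_le_right _ _).trans (Real.exp_le_exp.mpr ?_)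
    linarith

/-- comparison 2 -/
lemma pow_le_hR (p q ε : ℝ) (hε : 0 < ε) (hp : p - 1 ≤ q + 1 - ε) (R k : ℝ) (hR0 : 0 < R)
    (hk : 0 < k) :
    k ^ (-ε) * Real.exp (-|(q + 1) * (Real.log R - Real.log k)|) ≤ R ^ (-ε) * hR p q R k := by
  unfold hR
  have hkR : 0 < k / R := by positivity
  rw [Real.rpow_def_of_pos hkR, Real.rpow_def_of_pos hkR, Real.log_div hk.ne' hR0.ne',
    Real.rpow_def_of_pos hk, Real.rpow_def_of_pos hR0]
  split_ifs with h
  · rw [← Real.exp_add, ← Real.exp_add]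
    apply Real.exp_le_exp.mpr
    have := Real.log_le_log hk h
    have := le_abs_self ((q + 1) * (Real.log R - Real.log k))
    nlinarith
  · rw [← Real.exp_add, ← Real.exp_add]
    apply Real.exp_le_exp.mpr
    push Not at h
    have := Real.log_le_log hR0 h.le
    have := neg_le_abs ((q + 1) * (Real.log R - Real.log k))
    nlinarith

lemma hR_nonneg (p q R k : ℝ) (hR0 : 0 < R) (hk : 0 < k) : 0 ≤ hR p q R k := by
  unfold hR; split_ifs <;> positivity


lemma phi_hasSum (θ : ℝ) (hθ : 0 < θ) (hθπ : θ < Real.pi) (X Y : ℕ → ℝ) (j : ℕ) (Q : ℝ)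
    (hQ : 0 < Q) (hX : ∀ k, 1 ≤ k → 0 < X k) (hY : 0 < Y j)
    (h : phi θ X Y j = ENNReal.ofReal Q) :
    HasSum (fun k : ℕ => Gf θ (Real.log (Y j) - Real.log (X (k + 1)))) (Real.pi * Q) := by
  have hpi := Real.pi_pos
  have e : ∀ k : ℕ, Theta θ (X (k + 1)) (Y j) = Gf θ (Real.log (Y j) - Real.log (X (k + 1))) :=
    fun k => Theta_eq θ hθ hθπ _ _ (hX _ (by omega)) hY
  unfold phi at h
  simp_rw [e] at h
  have hne : (∑' k : ℕ, ENNReal.ofReal (Gf θ (Real.log (Y j) - Real.log (X (k + 1))))) ≠ ⊤ := by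
    intro ht
    rw [ht, ENNReal.mul_top (by simpa using hpi)] at h
    exact ENNReal.ofReal_ne_top h.symm
  have hsum : Summable (fun k : ℕ => Gf θ (Real.log (Y j) - Real.log (X (k + 1)))) := by
    have := ENNReal.summable_toReal hne
    refine this.congr fun k => ?_
    rw [ENNReal.toReal_ofReal (Gf_pos _ _).le]
  have hnn := fun k : ℕ => (Gf_pos θ (Real.log (Y j) - Real.log (X (k + 1)))).le
  rw [← ENNReal.ofReal_tsum_of_nonneg hnn hsum, ← ENNReal.ofReal_mul (by positivity)] at h
  rw [ENNReal.ofReal_eq_ofReal_iff (mul_nonneg (by positivity) (tsum_nonneg hnn)) hQ.le] at h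
  have : Real.pi * Q = ∑' k : ℕ, Gf θ (Real.log (Y j) - Real.log (X (k + 1))) := by
    rw [← h]; field_simp
  rw [this]
  exact hsum.hasSum

lemma core1 (θ : ℝ) (hθ : 0 < θ) (hθπ : θ < Real.pi) (q : ℝ) (hq : 0 < q) (x : ℕ → ℝ) (A : ℝ)
    (hx : ∀ k : ℕ, |x k - (q + 1) * Real.log ((k : ℝ) + 1)| ≤ A) :
    ∃ K > 0, ∀ y S, HasSum (fun k => Gf θ (y - x k)) S →
      S ≤ K * max 1 (Real.exp (y / (q + 1))) := by
  obtain ⟨C, hC, hG⟩ := Gf_le θ hθ hθπ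
  have hA : 0 ≤ A := (abs_nonneg _).trans (hx 0)
  have hK : 0 < 1 / (1 : ℝ) + 2 ^ q / q := by positivity
  refine ⟨C * Real.exp A * (1 / (1 : ℝ) + 2 ^ q / q), by positivity, fun y S hS => ?_⟩
  set R := max 1 (Real.exp (y / (q + 1))) with hRdef
  have hR1 : 1 ≤ R := le_max_left _ _
  have hR0 : 0 < R := by linarith
  have hyR : y ≤ (q + 1) * Real.log R := by
    have : y / (q + 1) ≤ Real.log R := by
      rw [Real.le_log_iff_exp_le hR0]; exact le_max_right _ _
    rw [div_le_iff₀ (by positivity)] at this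
    linarith
  have term : ∀ k : ℕ, Gf θ (y - x k) ≤ C * Real.exp A * hR 1 q R ((k : ℝ) + 1) := by
    intro k
    have h1 := min_le_hR 1 q le_rfl R ((k : ℝ) + 1) hR0 (by positivity)
    refine (hG _).trans ?_
    rw [mul_assoc]
    gcongr
    refine le_trans ?_ (mul_le_mul_of_nonneg_left h1 (Real.exp_pos A).le)
    rw [mul_min_of_nonneg _ _ (Real.exp_pos A).le, mul_one, ← Real.exp_add]
    apply min_le_min
    · exact Real.one_le_exp hA
    · apply Real.exp_le_exp.mpr
      have := (abs_le.mp (hx k)).1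
      linarith
  refine le_of_tendsto' hS.tendsto_sum_nat fun M => ?_
  calc ∑ k ∈ Finset.range M, Gf θ (y - x k)
      ≤ ∑ k ∈ Finset.range M, C * Real.exp A * hR 1 q R ((k : ℝ) + 1) :=
        Finset.sum_le_sum fun k _ => term k
    _ = C * Real.exp A * ∑ k ∈ Finset.range M, hR 1 q R ((k : ℝ) + 1) := by
        rw [Finset.mul_sum]
    _ ≤ C * Real.exp A * ((1 / (1 : ℝ) + 2 ^ q / q) * R) := by
        gcongr
        exact hR_sum 1 q one_pos le_rfl hq R hR1 M
    _ = _ := by ring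

lemma core2 (θ : ℝ) (hθ : 0 < θ) (hθπ : θ < Real.pi) (q : ℝ) (hq : 0 < q) (x x' : ℕ → ℝ)
    (A B ε : ℝ) (hε : 0 < ε) (hε2 : ε < q + 2)
    (hx : ∀ k : ℕ, |x k - (q + 1) * Real.log ((k : ℝ) + 1)| ≤ A)
    (hx' : ∀ k : ℕ, |x' k - x k| ≤ B * ((k : ℝ) + 1) ^ (-ε)) :
    ∃ K > 0, ∀ y y' S, 0 ≤ y → HasSum (fun k => Gf θ (y - x k)) S →
      HasSum (fun k => Gf θ (y' - x' k)) S →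
      min |y' - y| 1 ≤ K * (Real.exp (y / (q + 1))) ^ (-ε) := by
  have hA : 0 ≤ A := (abs_nonneg _).trans (hx 0)
  have hB : 0 ≤ B := by simpa using (abs_nonneg _).trans (hx' 0)
  have hxB : ∀ k : ℕ, |x' k - x k| ≤ B := fun k => by
    refine (hx' k).trans (mul_le_of_le_one_right hB ?_)
    exact Real.rpow_le_one_of_one_le_of_nonpos (by simp) (by linarith)
  obtain ⟨C, hC, hL⟩ := Gf_lip θ hθ hθπ B
  obtain ⟨c, hc, hlow⟩ := Gf_lower θ hθ hθπ ((q + 1) * Real.log 4 + A + B)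
  obtain ⟨p, hp, hp1, hpε⟩ : ∃ p : ℝ, 0 < p ∧ p ≤ 1 ∧ p - 1 ≤ q + 1 - ε :=
    ⟨min 1 (q + 2 - ε), lt_min one_pos (by linarith), min_le_left _ _, by
      linarith [min_le_right 1 (q + 2 - ε)]⟩
  set K0 := 1 / p + 2 ^ q / q with hK0
  have hK0p : 0 < K0 := by positivity
  set D := C * (B + 1) * Real.exp A with hD
  have hDp : 0 < D := by positivity
  refine ⟨D * K0 / c, by positivity, fun y y' S hy hS hS' => ?_⟩
  set R := Real.exp (y / (q + 1)) with hRdef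
  have hR1 : 1 ≤ R := Real.one_le_exp (by positivity)
  have hR0 : 0 < R := by linarith
  have hyR : y = (q + 1) * Real.log R := by
    rw [hRdef, Real.log_exp]; field_simp
  -- the perturbation terms
  have term : ∀ k : ℕ, |Gf θ (y - x' k) - Gf θ (y - x k)|
      ≤ D * R ^ (-ε) * hR p q R ((k : ℝ) + 1) := by
    intro k
    have e0 : |(y - x' k) - (y - x k)| = |x' k - x k| := by
      rw [abs_sub_comm]; congr 1; ring
    have h1 := hL (y - x' k) (y - x k) (by rw [e0]; exact hxB k)
    rw [e0] at h1
    have h2 := pow_le_hR p q ε hε hpε R ((k : ℝ) + 1) hR0 (by positivity)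
    have h3 : Real.exp (-|y - x k|)
        ≤ Real.exp A * Real.exp (-|(q + 1) * (Real.log R - Real.log ((k : ℝ) + 1))|) := by
      rw [← Real.exp_add]
      apply Real.exp_le_exp.mpr
      have e : (q + 1) * (Real.log R - Real.log ((k : ℝ) + 1))
        = (y - x k) + (x k - (q + 1) * Real.log ((k : ℝ) + 1)) := by rw [hyR]; ring
      have := abs_add_le (y - x k) (x k - (q + 1) * Real.log ((k : ℝ) + 1))
      rw [← e] at this
      linarith [hx k]
    have hkp : 0 ≤ ((k : ℝ) + 1) ^ (-ε) := by positivity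
    have h4 : |x' k - x k| ≤ (B + 1) * ((k : ℝ) + 1) ^ (-ε) := (hx' k).trans (by nlinarith)
    calc _ ≤ _ := h1
      _ ≤ C * ((B + 1) * ((k : ℝ) + 1) ^ (-ε)) *
          (Real.exp A * Real.exp (-|(q + 1) * (Real.log R - Real.log ((k : ℝ) + 1))|)) := by
            gcongr
      _ = D * (((k : ℝ) + 1) ^ (-ε)
          * Real.exp (-|(q + 1) * (Real.log R - Real.log ((k : ℝ) + 1))|)) := by
            rw [hD]; ring
      _ ≤ D * (R ^ (-ε) * hR p q R ((k : ℝ) + 1)) := by gcongr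
      _ = _ := by ring
  have hpart : ∀ M : ℕ, ∑ k ∈ Finset.range M, |Gf θ (y - x' k) - Gf θ (y - x k)|
      ≤ D * R ^ (-ε) * (K0 * R) := by
    intro M
    calc _ ≤ ∑ k ∈ Finset.range M, D * R ^ (-ε) * hR p q R ((k : ℝ) + 1) :=
          Finset.sum_le_sum fun k _ => term k
      _ = D * R ^ (-ε) * ∑ k ∈ Finset.range M, hR p q R ((k : ℝ) + 1) := by
          rw [Finset.mul_sum]
      _ ≤ _ := by
          gcongr
          exact hR_sum p q hp hp1 hq R hR1 M
  have hDs := summable_of_sum_range_le (fun k => abs_nonneg _) hpart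
  have hDt := Real.tsum_le_of_sum_range_le (fun k => abs_nonneg _) hpart
  have hDs' : Summable fun k => Gf θ (y - x' k) - Gf θ (y - x k) := hDs.of_abs
  have hDabs : |∑' k, (Gf θ (y - x' k) - Gf θ (y - x k))| ≤ D * R ^ (-ε) * (K0 * R) := by
    refine le_trans ?_ hDt
    have := norm_tsum_le_tsum_norm (f := fun k => Gf θ (y - x' k) - Gf θ (y - x k)) hDs
    simpa only [Real.norm_eq_abs] using this
  have hLs : HasSum (fun k => Gf θ (y' - x' k) - Gf θ (y - x' k))
      (-∑' k, (Gf θ (y - x' k) - Gf θ (y - x k))) := by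
    have := (hS'.sub hS).sub hDs'.hasSum
    rw [sub_self, zero_sub] at this
    refine this.congr_fun ?_ 
    intro k; ring
  have hm := Gf_mono θ hθ hθπ
  -- absolute values sum
  have hLabs : HasSum (fun k => |Gf θ (y' - x' k) - Gf θ (y - x' k)|)
      |∑' k, (Gf θ (y - x' k) - Gf θ (y - x k))| := by
    rcases le_total y y' with h | h
    · have hn : ∀ k, 0 ≤ Gf θ (y' - x' k) - Gf θ (y - x' k) := fun k =>
        sub_nonneg.mpr (hm (by linarith))
      have h0 := hLs.nonneg hn
      rw [← abs_neg, abs_of_nonneg h0]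
      simpa only [abs_of_nonneg (hn _)] using hLs
    · have hn : ∀ k, Gf θ (y' - x' k) - Gf θ (y - x' k) ≤ 0 := fun k =>
        sub_nonpos.mpr (hm (by linarith))
      have h0 := hLs.nonpos hn
      rw [← abs_neg, abs_of_nonpos h0]
      simpa only [abs_of_nonpos (hn _)] using hLs.neg
  set N := ⌈R⌉₊ with hN
  have hNR : R ≤ N := Nat.le_ceil R
  have hNR2 : (N : ℝ) < R + 1 := Nat.ceil_lt_add_one hR0.le
  have hfin := sum_le_hasSum (Finset.Ico N (2 * N)) (fun k _ => abs_nonneg _) hLabs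
  have hlow2 : ∀ k ∈ Finset.Ico N (2 * N),
      c * min |y' - y| 1 ≤ |Gf θ (y' - x' k) - Gf θ (y - x' k)| := by
    intro k hk
    rw [Finset.mem_Ico] at hk
    have hk1 : (N : ℝ) ≤ k := by exact_mod_cast hk.1
    have hk2 : (k : ℝ) + 1 ≤ 2 * N := by exact_mod_cast hk.2
    have := hlow (y - x' k) (y' - x' k) ?_
    · have e : y' - x' k - (y - x' k) = y' - y := by ring
      rwa [e] at this
    · have l1 : Real.log R ≤ Real.log ((k : ℝ) + 1) := Real.log_le_log hR0 (by linarith)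
      have l2 : Real.log ((k : ℝ) + 1) ≤ Real.log 4 + Real.log R := by
        rw [← Real.log_mul (by norm_num) hR0.ne']
        exact Real.log_le_log (by positivity) (by linarith)
      have a1 := abs_le.mp (hx k)
      have a2 := abs_le.mp (hxB k)
      have l1' := mul_le_mul_of_nonneg_left l1 (by positivity : 0 ≤ q + 1)
      have l2' := mul_le_mul_of_nonneg_left l2 (by positivity : 0 ≤ q + 1)
      rw [mul_add] at l2'
      have l4 : 0 ≤ (q + 1) * Real.log 4 := mul_nonneg (by positivity) (Real.log_nonneg (by norm_num))
      rw [abs_le]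
      constructor <;> linarith
  have hcard := Finset.card_nsmul_le_sum _ _ _ hlow2
  rw [Nat.card_Ico, nsmul_eq_mul, show 2 * N - N = N by omega] at hcard
  have hmin0 : 0 ≤ min |y' - y| 1 := by positivity
  have h1 : R * (c * min |y' - y| 1) ≤ R * (D * R ^ (-ε) * K0) := by
    calc R * (c * min |y' - y| 1) ≤ N * (c * min |y' - y| 1) := by gcongr
      _ ≤ _ := hcard.trans (hfin.trans hDabs)
      _ = _ := by ring
  have h2 := le_of_mul_le_mul_left h1 hR0
  rw [div_mul_eq_mul_div, le_div_iff₀ hc]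
  linarith

theorem stmt_18 (θ : ℝ) (hθ : 0 < θ) (hθπ : θ < Real.pi)
    (Q : ℕ → ℝ) (hQpos : ∀ k, 1 ≤ k → 0 < Q k)
    (hQ : (fun k : ℕ => Q k - (k : ℝ)) =O[atTop] fun _ : ℕ => (1 : ℝ))
    (ε : ℝ) (hε0 : 0 < ε) (hε : ε < 1 + θ / Real.pi + 1)
    (X X' Y Y' : ℕ → ℝ)
    (hXpos : ∀ k, 1 ≤ k → 0 < X k) (hX'pos : ∀ k, 1 ≤ k → 0 < X' k)
    (hYpos : ∀ j, 1 ≤ j → 0 < Y j) (hY'pos : ∀ j, 1 ≤ j → 0 < Y' j)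
    (hX : (fun k : ℕ => Real.log (X k) - (1 + θ / Real.pi) * Real.log k)
      =o[atTop] fun _ : ℕ => (1 : ℝ))
    (hX' : (fun k : ℕ => Real.log (X' k) - Real.log (X k)) =O[atTop]
      fun k : ℕ => (k : ℝ) ^ (-ε))
    (hfix : ∀ j, 1 ≤ j → phi θ X Y j = ENNReal.ofReal (Q j))
    (hfix' : ∀ j, 1 ≤ j → phi θ X' Y' j = ENNReal.ofReal (Q j)) :
    (fun j : ℕ => Real.log (Y' j) - Real.log (Y j)) =O[atTop]
      fun j : ℕ => (j : ℝ) ^ (-ε) := by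
  have hpi := Real.pi_pos
  have hq : 0 < θ / Real.pi := by positivity
  set q := θ / Real.pi with hqdef
  obtain ⟨A, hA⟩ : ∃ A, ∀ k : ℕ, |Real.log (X (k + 1)) - (q + 1) * Real.log ((k : ℝ) + 1)| ≤ A := by
    obtain ⟨A, hA⟩ := isBigO_one_nat_atTop_iff.mp hX.isBigO
    refine ⟨A, fun k => ?_⟩
    have := hA (k + 1)
    rw [Real.norm_eq_abs, Nat.cast_add, Nat.cast_one, add_comm 1 q] at this
    exact this
  obtain ⟨B, hB⟩ : ∃ B, ∀ k : ℕ, |Real.log (X' (k + 1)) - Real.log (X (k + 1))|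
      ≤ B * ((k : ℝ) + 1) ^ (-ε) := by
    have h1 := hX'.comp_tendsto (tendsto_add_atTop_nat 1)
    rw [isBigO_nat_atTop_iff] at h1
    · obtain ⟨B, hB⟩ := h1
      refine ⟨B, fun k => ?_⟩
      have := hB k
      simp only [Function.comp_apply, Real.norm_eq_abs, Nat.cast_add, Nat.cast_one] at this
      rwa [abs_of_nonneg (by positivity : 0 ≤ ((k : ℝ) + 1) ^ (-ε))] at this
    · intro k hk
      simp only [Function.comp_apply, Nat.cast_add, Nat.cast_one] at hk
      have : 0 < ((k : ℝ) + 1) ^ (-ε) := by positivity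
      linarith
  obtain ⟨CQ, hCQ⟩ := isBigO_one_nat_atTop_iff.mp hQ
  obtain ⟨K1, hK1, H1⟩ := core1 θ hθ hθπ q hq (fun k => Real.log (X (k + 1))) A hA
  obtain ⟨K2, hK2, H2⟩ := core2 θ hθ hθπ q hq (fun k => Real.log (X (k + 1)))
    (fun k => Real.log (X' (k + 1))) A B ε hε0 (by linarith) hA hB
  set d := Real.pi / (2 * K1) with hd
  have hdp : 0 < d := by positivity
  have hlim : Tendsto (fun j : ℕ => K2 * d ^ (-ε) * (j : ℝ) ^ (-ε)) atTop (𝓝 0) := by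
    simpa using ((tendsto_rpow_neg_atTop hε0).comp tendsto_natCast_atTop_atTop).const_mul
      (K2 * d ^ (-ε))
  have ev1 := hlim.eventually (gt_mem_nhds one_pos)
  have ev2 := (tendsto_natCast_atTop_atTop (R := ℝ)).eventually_ge_atTop (2 * CQ)
  have ev3 := (tendsto_natCast_atTop_atTop (R := ℝ)).eventually_gt_atTop (1 / d)
  refine IsBigO.of_bound (K2 * d ^ (-ε)) ?_
  filter_upwards [ev1, ev2, ev3, eventually_ge_atTop 1] with j e1 e2 e3 hj
  have hj0 : (0 : ℝ) < j := by exact_mod_cast hj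
  have S1 := phi_hasSum θ hθ hθπ X Y j (Q j) (hQpos j hj) hXpos (hYpos j hj) (hfix j hj)
  have S2 := phi_hasSum θ hθ hθπ X' Y' j (Q j) (hQpos j hj) hX'pos (hY'pos j hj) (hfix' j hj)
  have hup := H1 _ _ S1
  set y := Real.log (Y j) with hy
  have hQj : (j : ℝ) / 2 ≤ Q j := by
    have := hCQ j
    rw [Real.norm_eq_abs] at this
    linarith [(abs_le.mp this).1]
  have hdj : d * j ≤ max 1 (Real.exp (y / (q + 1))) := by
    rw [hd, div_mul_eq_mul_div, div_le_iff₀ (by positivity)]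
    nlinarith
  have hdj1 : 1 < d * j := by
    rw [div_lt_iff₀ hdp] at e3; linarith
  have hR : d * j ≤ Real.exp (y / (q + 1)) := by
    rcases le_max_iff.mp hdj with h | h
    · linarith
    · exact h
  have hy0 : 0 ≤ y := by
    have : 0 < y / (q + 1) := by
      rw [← Real.one_lt_exp_iff]; linarith
    have h2 : y = y / (q + 1) * (q + 1) := by field_simp
    rw [h2]; positivity
  have fin := H2 y (Real.log (Y' j)) _ hy0 S1 S2
  have hpow : (Real.exp (y / (q + 1))) ^ (-ε) ≤ d ^ (-ε) * (j : ℝ) ^ (-ε) := by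
    rw [← Real.mul_rpow hdp.le hj0.le]
    exact Real.rpow_le_rpow_of_nonpos (by positivity) hR (by linarith)
  have fin2 : min |Real.log (Y' j) - y| 1 ≤ K2 * d ^ (-ε) * (j : ℝ) ^ (-ε) := by
    rw [mul_assoc]
    exact fin.trans (by gcongr)
  rw [Real.norm_eq_abs, Real.norm_eq_abs, abs_of_nonneg (by positivity : 0 ≤ (j : ℝ) ^ (-ε))]
  rcases min_le_iff.mp fin2 with h | h
  · exact h
  · linarith
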